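/- arXiv:2511.02422 — 2 statements merged into one kernel-verified Lean document; each statement's English description precedes it below -/
import Mathlib

section
/- Let m be a positive integer, let p : Ω → (Fin m → ℝ) be a random vector of p-values on a probability space, and let H₀ ⊆ Fin m with |H₀| = m₀ ≥ 1 be such that the null p-values (p_i)_{i∈H₀} are independent and each uniformly distributed on [0,1]. For α ∈ [0,1], consider the Simes template t_k = α k / m for k ∈ {1,…,m}. Then its Joint Error Rate satisfies JER(t) = ℙ(∃ k ∈ {1,…,m₀} : p_{(k:H₀)} < α k / m) ≤ (m₀/m)·α ≤ α. -/
open MeasureTheory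

/-- The `k`-th smallest value (1-based) among `(p i)_{i ∈ A}`. -/
noncomputable def orderStat {m : ℕ} (p : Fin m → ℝ) (A : Finset (Fin m)) (k : ℕ) : ℝ :=
  ((A.val.map p).sort (· ≤ ·)).getD (k - 1) 0

/-!
Let `R` be the largest `k` such that at least `k` null p-values lie below `t k = c * k`; the event
to bound is `1 ≤ R`. As in the Benjamini-Hochberg argument, on `{R = k}` at least `k` of the events
`{X i < t k}` occur, so `ℙ(1 ≤ R) ≤ ∑ i, ∑ k, k⁻¹ * ℙ(X i < t k, R = k)`. If `X i < t R`, then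
lowering `X i` further does not change `R`, so there `R` may be replaced by a count `R i` that does
not involve `X i`. By independence the sum is at most
`∑ i, ∑ k, k⁻¹ * (c * k) * ℙ(R i = k) ≤ ∑ i, c`.
-/

open ProbabilityTheory Finset Function

lemma orderStat_lt_iff {m : ℕ} (p : Fin m → ℝ) (A : Finset (Fin m)) {k : ℕ}
    (hk : k ∈ Icc 1 #A) (t : ℝ) :
    orderStat p A k < t ↔ k ≤ #{i ∈ A | p i < t} := by
  obtain ⟨hk_pos, hk_le⟩ := mem_Icc.1 hk
  set l := (A.val.map p).sort (· ≤ ·) with hl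
  have length_l : l.length = #A := by simp [hl]
  have card_lt : #{i | l.get i < t} = #{i ∈ A | p i < t} := by
    calc #{i | l.get i < t} = (univ.val.map l.get).countP (· < t) := by
          rw [Multiset.countP_map]
          rfl
      _ = (A.val.map p).countP (· < t) := by
          rw [Fin.univ_val_map, List.ofFn_get, hl, Multiset.sort_eq]
      _ = #{i ∈ A | p i < t} := Multiset.countP_map _ _ (· < t)
  have monotone_l : Monotone l.get := (Multiset.pairwise_sort _ _).sortedLE.monotone_get
  have lt_iff := Tuple.lt_card_lt_iff_apply_lt_of_monotone (j := ⟨k - 1, by omega⟩) (a := t)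
    monotone_l
  rw [orderStat, ← hl, List.getD_eq_getElem _ _ (by omega), ← card_lt]
  exact lt_iff.symm.trans (by simp only; omega)

section StepUp

variable {ι : Type*} [Fintype ι]

/-- The number of rejections of the step-up multiple testing procedure with thresholds `t` on the
p-values `x`: the largest `k ≤ |ι|` such that at least `k` of the `x i` are less than `t k`.
It is `0` when there is no such `k ≥ 1`, and the value `t 0` plays no role. -/
noncomputable def stepUpCount (t : ℕ → ℝ) (x : ι → ℝ) : ℕ :=
  Nat.findGreatest (fun k => k ≤ #{i | x i < t k}) (Fintype.card ι)

lemma stepUpCount_le (t : ℕ → ℝ) (x : ι → ℝ) : stepUpCount t x ≤ Fintype.card ι :=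
  Nat.findGreatest_le _

lemma stepUpCount_le_card_lt (t : ℕ → ℝ) (x : ι → ℝ) :
    stepUpCount t x ≤ #{i | x i < t (stepUpCount t x)} :=
  Nat.findGreatest_spec (P := fun k => k ≤ #{i | x i < t k}) (Nat.zero_le _) (Nat.zero_le _)

lemma measurable_stepUpCount (t : ℕ → ℝ) : Measurable (stepUpCount t : (ι → ℝ) → ℕ) := by
  refine measurable_findGreatest fun k _ => ?_
  simp only [card_filter]
  exact measurableSet_le measurable_const <| Finset.measurable_sum _ fun i _ =>
    Measurable.ite (measurableSet_lt (measurable_pi_apply i) measurable_const)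
      measurable_const measurable_const

lemma stepUpCount_update [DecidableEq ι] {t : ℕ → ℝ} (ht : Monotone t) {x : ι → ℝ} {i : ι} {y : ℝ}
    (hx : x i < t (stepUpCount t x)) (hy : y < t (stepUpCount t x)) :
    stepUpCount t (update x i y) = stepUpCount t x := by
  have card_update : ∀ k, stepUpCount t x ≤ k →
      #{j | update x i y j < t k} = #{j | x j < t k} := by
    intro k hk
    congr! 2 with j
    obtain rfl | hj := eq_or_ne j i
    · simp only [update_self, hx.trans_le (ht hk), hy.trans_le (ht hk)]
    · rw [update_of_ne hj]
  refine Nat.findGreatest_eq_iff.2 ⟨stepUpCount_le t x, fun _ => ?_, fun k hk hk_card => ?_⟩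
  · rw [card_update _ le_rfl]
    exact stepUpCount_le_card_lt t x
  · rw [card_update k hk.le]
    exact Nat.findGreatest_is_greatest (P := fun k => k ≤ #{i | x i < t k}) hk hk_card

end StepUp

lemma exists_orderStat_lt_iff {m : ℕ} (p : Fin m → ℝ) (A : Finset (Fin m)) (t : ℕ → ℝ) :
    (∃ k ∈ Icc 1 #A, orderStat p A k < t k) ↔ 0 < stepUpCount t (fun i : A => p i) := by
  have card_subtype : ∀ s : ℝ, #{i : A | p i < s} = #{i ∈ A | p i < s} := fun s => by
    simp only [card_filter, sum_coe_sort A fun i => if p i < s then 1 else 0]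
  simp only [stepUpCount, Nat.findGreatest_pos, Fintype.card_coe, card_subtype]
  refine exists_congr fun k => ⟨fun ⟨hk, hlt⟩ => ?_, fun ⟨hk_pos, hk_le, hcard⟩ => ?_⟩
  · exact ⟨(mem_Icc.1 hk).1, (mem_Icc.1 hk).2, (orderStat_lt_iff p A hk _).1 hlt⟩
  · have hk : k ∈ Icc 1 #A := mem_Icc.2 ⟨hk_pos, hk_le⟩
    exact ⟨hk, (orderStat_lt_iff p A hk _).2 hcard⟩

section Probability

variable {Ω ι : Type*} [MeasurableSpace Ω] {μ : Measure Ω}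

lemma mul_measure_le_sum_measure_inter {s : Set Ω} (hs : NullMeasurableSet s μ) (I : Finset ι)
    {A : ι → Set Ω} (hA : ∀ i ∈ I, NullMeasurableSet (A i) μ) [∀ i, DecidablePred (· ∈ A i)]
    {k : ℕ} (hk : ∀ ω ∈ s, k ≤ #{i ∈ I | ω ∈ A i}) :
    k * μ s ≤ ∑ i ∈ I, μ (A i ∩ s) := by
  have hAs : ∀ i ∈ I, NullMeasurableSet (A i ∩ s) μ := fun i hi => (hA i hi).inter hs
  calc k * μ s = ∫⁻ ω, s.indicator (fun _ => (k : ENNReal)) ω ∂μ :=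
        (lintegral_indicator_const₀ hs _).symm
    _ ≤ ∫⁻ ω, ∑ i ∈ I, (A i ∩ s).indicator (fun _ => (1 : ENNReal)) ω ∂μ := by
        refine lintegral_mono fun ω => Set.indicator_apply_le' (fun hω => ?_) fun _ => zero_le
        calc (k : ENNReal) ≤ #{i ∈ I | ω ∈ A i} := Nat.cast_le.2 (hk ω hω)
          _ = ∑ i ∈ I, (A i ∩ s).indicator (fun _ => (1 : ENNReal)) ω := by
            rw [card_filter, Nat.cast_sum]
            refine sum_congr rfl fun i _ => ?_
            by_cases hi : ω ∈ A i <;> simp [hi, hω]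
    _ = ∑ i ∈ I, μ (A i ∩ s) := by
        rw [lintegral_finsetSum' _ fun i hi => aemeasurable_const.indicator₀ (hAs i hi)]
        exact sum_congr rfl fun i hi => lintegral_indicator_one₀ (hAs i hi)

lemma sum_measure_eq_le_measure_univ {β : Type*} [MeasurableSpace β] [MeasurableSingletonClass β]
    {Y : Ω → β} (hY : AEMeasurable Y μ) (s : Finset β) :
    ∑ b ∈ s, μ {ω | Y ω = b} ≤ μ Set.univ :=
  sum_measure_le_measure_univ (fun b _ => hY.nullMeasurable (measurableSet_singleton b))
    fun _ _ _ _ hne => (Set.disjoint_left.2 fun _ hb hb' => hne (hb.symm.trans hb')).aedisjoint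

lemma indepFun_update_of_iIndepFun [Finite ι] [DecidableEq ι] {β : ι → Type*}
    [∀ i, MeasurableSpace (β i)] {X : ∀ i, Ω → β i} (hindep : iIndepFun X μ)
    (hX : ∀ i, AEMeasurable (X i) μ) (i : ι) (y : β i) :
    IndepFun (X i) (fun ω => update (fun j => X j ω) i y) μ := by
  cases nonempty_fintype ι
  have := hindep.isProbabilityMeasure
  obtain ⟨ω₀⟩ := nonempty_of_isProbabilityMeasure μ
  have hsplit : IndepFun (fun ω (j : ({i} : Finset ι)) => X j ω)
      (fun ω (j : univ.erase i) => X j ω) μ :=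
    hindep.indepFun_finset₀ {i} (univ.erase i) (by simp) hX
  have update_eq : (fun ω => update (fun j => X j ω) i y) =
      updateFinset (update (fun j => X j ω₀) i y) (univ.erase i) ∘ fun ω j => X j ω := by
    ext ω j
    by_cases hj : j = i
    · subst hj
      simp [updateFinset]
    · simp [updateFinset, hj]
  rw [update_eq]
  exact hsplit.comp (measurable_pi_apply (⟨i, mem_singleton_self i⟩ : ({i} : Finset ι)))
    measurable_updateFinset

/-- `X` is stochastically larger than a uniform variable on `[0, 1]`, the defining property of a
valid null p-value. On a probability space this is equivalent to the usual condition
`μ {X ≤ t} ≤ t` for `t ∈ [0, 1]`. -/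
def IsSuperUniform (X : Ω → ℝ) (μ : Measure Ω) : Prop :=
  ∀ t : ℝ, μ {ω | X ω < t} ≤ ENNReal.ofReal t

lemma isSuperUniform_of_map_eq {X : Ω → ℝ} (hX : AEMeasurable X μ)
    (hunif : μ.map X = volume.restrict (Set.Icc 0 1)) : IsSuperUniform X μ := fun t =>
  calc μ {ω | X ω < t} = volume (Set.Iio t ∩ Set.Icc 0 1) := by
        rw [← Measure.restrict_apply measurableSet_Iio, ← hunif,
          Measure.map_apply_of_aemeasurable hX measurableSet_Iio]
        rfl
    _ ≤ volume (Set.Ico 0 t) := measure_mono fun _ hx => ⟨hx.2.1, hx.1⟩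
    _ = ENNReal.ofReal t := by rw [Real.volume_Ico, sub_zero]

variable [Fintype ι] {X : ι → Ω → ℝ} {t : ℕ → ℝ} {c : ι → ENNReal}

lemma mul_measure_stepUpCount_eq_le [DecidableEq ι] (hindep : iIndepFun X μ)
    (hX : ∀ i, AEMeasurable (X i) μ) (ht : Monotone t) {y : ℝ} {k : ℕ} (hy : y < t k) :
    k * μ {ω | stepUpCount t (fun i => X i ω) = k} ≤
      ∑ i, μ {ω | X i ω < t k} * μ {ω | stepUpCount t (update (fun j => X j ω) i y) = k} := by
  have null_eq : NullMeasurableSet {ω | stepUpCount t (fun i => X i ω) = k} μ :=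
    ((measurable_stepUpCount t).comp_aemeasurable (aemeasurable_pi_lambda _ hX)).nullMeasurable
      (measurableSet_singleton k)
  have null_lt : ∀ i, NullMeasurableSet {ω | X i ω < t k} μ := fun i =>
    (hX i).nullMeasurable measurableSet_Iio
  calc k * μ {ω | stepUpCount t (fun i => X i ω) = k}
      ≤ ∑ i, μ ({ω | X i ω < t k} ∩ {ω | stepUpCount t (fun i => X i ω) = k}) := by
        refine mul_measure_le_sum_measure_inter null_eq univ (fun i _ => null_lt i) ?_
        rintro ω rfl
        exact stepUpCount_le_card_lt t _
    _ ≤ ∑ i, μ ({ω | X i ω < t k} ∩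
          {ω | stepUpCount t (update (fun j => X j ω) i y) = k}) := by
        refine sum_le_sum fun i _ => measure_mono ?_
        rintro ω ⟨hlt, rfl⟩
        exact ⟨hlt, stepUpCount_update ht hlt hy⟩
    _ = ∑ i, μ {ω | X i ω < t k} *
          μ {ω | stepUpCount t (update (fun j => X j ω) i y) = k} := by
        refine sum_congr rfl fun i _ => ?_
        exact (indepFun_update_of_iIndepFun hindep hX i y).measure_inter_preimage_eq_mul _ _
          measurableSet_Iio (measurable_stepUpCount t (measurableSet_singleton k))

theorem measure_stepUpCount_pos_le (hindep : iIndepFun X μ) (hX : ∀ i, AEMeasurable (X i) μ)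
    (ht : Monotone t) (hc : ∀ i, ∀ k ≠ 0, μ {ω | X i ω < t k} ≤ k * c i) :
    μ {ω | 0 < stepUpCount t (fun i => X i ω)} ≤ ∑ i, c i := by
  classical
  have := hindep.isProbabilityMeasure
  obtain ⟨y, hy⟩ := exists_lt (t 1)
  let R (ω : Ω) : ℕ := stepUpCount t fun i => X i ω
  let R' (i : ι) (ω : Ω) : ℕ := stepUpCount t (update (fun j => X j ω) i y)
  have R_eq_le : ∀ k ∈ Icc 1 (Fintype.card ι), μ {ω | R ω = k} ≤ ∑ i, c i * μ {ω | R' i ω = k} := by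
    intro k hk
    have hk_pos : 1 ≤ k := (mem_Icc.1 hk).1
    have hk_ne : k ≠ 0 := by omega
    refine (ENNReal.mul_le_mul_iff_right (Nat.cast_ne_zero.2 hk_ne) (ENNReal.natCast_ne_top k)).1 ?_
    calc k * μ {ω | R ω = k} ≤ ∑ i, μ {ω | X i ω < t k} * μ {ω | R' i ω = k} :=
          mul_measure_stepUpCount_eq_le hindep hX ht (hy.trans_le (ht hk_pos))
      _ ≤ ∑ i, k * c i * μ {ω | R' i ω = k} := by gcongr with i; exact hc i k hk_ne
      _ = k * ∑ i, c i * μ {ω | R' i ω = k} := by simp only [mul_sum, mul_assoc]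
  have sum_R'_eq_le : ∀ i, ∑ k ∈ Icc 1 (Fintype.card ι), μ {ω | R' i ω = k} ≤ 1 := by
    intro i
    have aemeasurable_R' : AEMeasurable (R' i) μ :=
      ((measurable_stepUpCount t).comp measurable_update_left).comp_aemeasurable
        (aemeasurable_pi_lambda _ hX)
    exact (sum_measure_eq_le_measure_univ aemeasurable_R' _).trans_eq measure_univ
  calc μ {ω | 0 < R ω} ≤ μ (⋃ k ∈ Icc 1 (Fintype.card ι), {ω | R ω = k}) :=
        measure_mono fun ω hω =>
          Set.mem_biUnion (mem_Icc.2 ⟨hω, stepUpCount_le t _⟩) rfl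
    _ ≤ ∑ k ∈ Icc 1 (Fintype.card ι), μ {ω | R ω = k} := measure_biUnion_finset_le _ _
    _ ≤ ∑ k ∈ Icc 1 (Fintype.card ι), ∑ i, c i * μ {ω | R' i ω = k} := sum_le_sum R_eq_le
    _ = ∑ i, c i * ∑ k ∈ Icc 1 (Fintype.card ι), μ {ω | R' i ω = k} := by
        rw [sum_comm]
        simp only [mul_sum]
    _ ≤ ∑ i, c i := sum_le_sum fun i _ => mul_le_of_le_one_right' (sum_R'_eq_le i)

end Probability

theorem simes_template_controls_JER_general
    {Ω : Type*} [MeasurableSpace Ω] (μ : Measure Ω) (m : ℕ) (hm : 0 < m) (p : Ω → Fin m → ℝ)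
    (H0 : Finset (Fin m)) (hmeas : ∀ i ∈ H0, AEMeasurable (fun ω => p ω i) μ)
    (hindep : iIndepFun (fun (i : {i // i ∈ H0}) (ω : Ω) => p ω i) μ)
    (hsuper : ∀ i ∈ H0, IsSuperUniform (fun ω => p ω i) μ)
    (α : ℝ) (hα : 0 ≤ α) :
    μ {ω | ∃ k ∈ Icc 1 #H0, orderStat (p ω) H0 k < α * k / m}
        ≤ ENNReal.ofReal ((#H0 / m : ℝ) * α)
      ∧ (#H0 / m : ℝ) * α ≤ α := by
  have hm' : (0 : ℝ) < m := Nat.cast_pos.2 hm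
  have card_le : #H0 ≤ m := card_finset_fin_le H0
  refine ⟨?_, mul_le_of_le_one_left hα ((div_le_one hm').2 (Nat.cast_le.2 card_le))⟩
  have monotone_template : Monotone fun k : ℕ => α * k / m := fun k l hkl => by
    dsimp only
    gcongr
  have measure_lt_le : ∀ i : H0, ∀ k : ℕ, k ≠ 0 →
      μ {ω | p ω i < α * k / m} ≤ k * ENNReal.ofReal (α / m) := fun i k _ =>
    calc μ {ω | p ω i < α * k / m} ≤ ENNReal.ofReal (α * k / m) := hsuper i i.2 _
      _ = k * ENNReal.ofReal (α / m) := by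
        rw [← nsmul_eq_mul, ← ENNReal.ofReal_nsmul, nsmul_eq_mul]
        ring_nf
  simp only [exists_orderStat_lt_iff _ _ fun k : ℕ => α * k / m]
  calc μ {ω | 0 < stepUpCount (fun k : ℕ => α * k / m) fun i : H0 => p ω i}
      ≤ ∑ _i : H0, ENNReal.ofReal (α / m) :=
        measure_stepUpCount_pos_le hindep (fun i => hmeas i i.2) monotone_template measure_lt_le
    _ = ENNReal.ofReal ((#H0 / m : ℝ) * α) := by
        rw [sum_const, card_univ, Fintype.card_coe, ← ENNReal.ofReal_nsmul, nsmul_eq_mul]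
        ring_nf

/-- The Simes template `t k = α k / m` controls the Joint Error Rate at level
`(m₀/m)·α ≤ α` when the null p-values `(pᵢ)_{i ∈ H₀}` are independent and
`Uniform[0,1]`. -/
theorem simes_template_controls_JER
    {Ω : Type*} [MeasurableSpace Ω] (μ : Measure Ω) [IsProbabilityMeasure μ]
    (m : ℕ) (hm : 0 < m) (p : Ω → Fin m → ℝ)
    (H0 : Finset (Fin m)) (m₀ : ℕ) (hcard : H0.card = m₀) (hm₀ : 1 ≤ m₀)
    (hmeas : ∀ i, Measurable (fun ω => p ω i))
    (hindep : ProbabilityTheory.iIndepFun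
      (fun (i : {i // i ∈ H0}) (ω : Ω) => p ω i) μ)
    (hunif : ∀ i ∈ H0, Measure.map (fun ω => p ω i) μ = volume.restrict (Set.Icc (0 : ℝ) 1))
    (α : ℝ) (hα : α ∈ Set.Icc (0 : ℝ) 1) :
    μ {ω | ∃ k ∈ Finset.Icc 1 m₀, orderStat (p ω) H0 k < α * k / m}
        ≤ ENNReal.ofReal ((m₀ / m : ℝ) * α)
      ∧ (m₀ / m : ℝ) * α ≤ α := by
  subst hcard
  exact simes_template_controls_JER_general μ m hm p H0 (fun i _ => (hmeas i).aemeasurable) hindep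
    (fun i hi => isSuperUniform_of_map_eq (hmeas i).aemeasurable (hunif i hi)) α hα.1
end

section
/- Let m, B be positive integers and α ∈ (0,1). Let p⁽¹⁾, …, p⁽ᴮ⁾ be random vectors in [0,1]^m, defined on a common probability space, that form an exchangeable family (the joint law is invariant under permutations of the B vectors), where p⁽¹⁾ is the observed vector of null p-values. For a vector y ∈ [0,1]^m with order statistics y_{(1)} ≤ … ≤ y_{(m)}, define λ(y) = min_{k∈{1,…,m}} m·y_{(k)}/k. Let λ* be the ⌊αB⌋-th smallest value among λ(p⁽¹⁾), …, λ(p⁽ᴮ⁾) (and λ* = 0 if ⌊αB⌋ = 0). Then ℙ( ∃ k ∈ {1,…,m} : p⁽¹⁾_{(k)} < λ*·k/m ) ≤ α. -/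
open MeasureTheory

/-- The calibration statistic of the calibrated Simes method:
`λ(y) = min_{k ∈ {1,…,m}} m · y₍ₖ₎ / k`. -/
noncomputable def lambdaFun (m : ℕ) (y : Fin m → ℝ) : ℝ :=
  ⨅ k : Fin m, (m : ℝ) * orderStat y Finset.univ ((k : ℕ) + 1) / ((k : ℕ) + 1)

/-!
Since `λ` is a minimum, the event `∃ k, p⁽¹⁾₍ₖ₎ < λ* k / m` is just `λ(p⁽¹⁾) < λ*`. With
`K = ⌊αB⌋ ≥ 1`, at every outcome fewer than `K` of the `B` scores `λ(p⁽ᵇ⁾)` lie strictly below their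
`K`-th smallest value. Permutations that preserve the joint law and carry any copy to any other give
each copy the same probability of being one of these, so this probability is at most `K / B ≤ α`.
-/

open Finset ProbabilityTheory
open scoped ENNReal

section OrderStatistics

theorem getElem_le_iff_lt_countP {β : Type*} [LinearOrder β] (t : β) {l : List β}
    (hl : l.Pairwise (· ≤ ·)) {k : ℕ} (hk : k < l.length) :
    l[k] ≤ t ↔ k < l.countP (· ≤ t) := by
  induction l generalizing k with
  | nil => simp at hk
  | cons a l ih =>
    obtain ⟨head_le, tail_sorted⟩ := List.pairwise_cons.1 hl
    by_cases ha : a ≤ t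
    · cases k with
      | zero => simp [ha]
      | succ k => simpa [ha] using ih tail_sorted (by simpa using hk)
    · have all_gt : ∀ x ∈ a :: l, t < x := by
        simpa [not_le.1 ha] using fun x hx => (not_le.1 ha).trans_le (head_le x hx)
      have countP_eq_zero : (a :: l).countP (· ≤ t) = 0 := by
        simpa only [List.countP_eq_zero, decide_eq_true_eq, not_le] using all_gt
      simpa only [countP_eq_zero, not_lt_zero, iff_false, not_le]
        using all_gt _ (List.getElem_mem hk)

variable {m : ℕ} {A : Finset (Fin m)} {k : ℕ}

theorem orderStat_le_iff (p : Fin m → ℝ) (hk : 1 ≤ k) (hkA : k ≤ #A) (t : ℝ) :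
    orderStat p A k ≤ t ↔ k ≤ #{i ∈ A | p i ≤ t} := by
  have index_lt : k - 1 < ((A.val.map p).sort (· ≤ ·)).length := by
    rw [Multiset.length_sort, Multiset.card_map, card_val]
    lia
  have countP_eq : ((A.val.map p).sort (· ≤ ·)).countP (· ≤ t) = #{i ∈ A | p i ≤ t} := by
    rw [← Multiset.coe_countP, Multiset.sort_eq, Multiset.countP_map]
    rfl
  rw [orderStat, List.getD_eq_getElem _ _ index_lt,
    getElem_le_iff_lt_countP t (Multiset.pairwise_sort _ _), countP_eq]
  lia

theorem orderStat_nonneg {p : Fin m → ℝ} (hp : ∀ i ∈ A, 0 ≤ p i) (k : ℕ) :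
    0 ≤ orderStat p A k := by
  rw [orderStat]
  rcases lt_or_ge (k - 1) ((A.val.map p).sort (· ≤ ·)).length with h | h
  · rw [List.getD_eq_getElem _ _ h]
    obtain ⟨i, hi, hpi⟩ := Multiset.mem_map.1 ((Multiset.mem_sort _).1 (List.getElem_mem h))
    exact (hp i hi).trans_eq hpi
  · rw [List.getD_eq_default _ _ h]

theorem measurable_card_filter {ι E : Type*} [MeasurableSpace E] (s : Finset ι)
    {q : ι → E → Prop} [∀ i, DecidablePred (q i)] (hq : ∀ i ∈ s, MeasurableSet {x | q i x}) :
    Measurable fun x => #{i ∈ s | q i x} := by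
  simp_rw [card_filter]
  exact Finset.measurable_sum _ fun i hi =>
    Measurable.ite (hq i hi) measurable_const measurable_const

theorem measurable_orderStat (hk : 1 ≤ k) (hkA : k ≤ #A) :
    Measurable fun y : Fin m → ℝ => orderStat y A k := by
  refine measurable_of_Iic fun t => ?_
  have preimage_eq : (fun y : Fin m → ℝ => orderStat y A k) ⁻¹' Set.Iic t
      = (fun y : Fin m → ℝ => #{i ∈ A | y i ≤ t}) ⁻¹' Set.Ici k :=
    Set.ext fun y => orderStat_le_iff y hk hkA t
  rw [preimage_eq]
  exact measurable_card_filter A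
    (fun i _ => measurableSet_le (measurable_pi_apply i) measurable_const) measurableSet_Ici

end OrderStatistics

section CalibrationStatistic

variable {m : ℕ}

theorem measurable_lambdaFun (m : ℕ) : Measurable (lambdaFun m) :=
  Measurable.iInf fun k =>
    ((measurable_orderStat (by lia) (by rw [card_fin]; lia)).const_mul _).div_const _

theorem lambdaFun_nonneg {y : Fin m → ℝ} (hy : ∀ i, 0 ≤ y i) : 0 ≤ lambdaFun m y :=
  Real.iInf_nonneg fun k => by
    have := orderStat_nonneg (fun i (_ : i ∈ univ) => hy i) (k + 1)
    positivity

theorem lambdaFun_lt_iff (hm : 0 < m) (y : Fin m → ℝ) (c : ℝ) :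
    lambdaFun m y < c ↔ ∃ k ∈ Icc 1 m, orderStat y univ k < c * k / m := by
  have : Nonempty (Fin m) := ⟨⟨0, hm⟩⟩
  have term_lt_iff (x : ℝ) {k : ℕ} (hk : 0 < k) : m * x / k < c ↔ x < c * k / m := by
    rw [div_lt_iff₀ (by positivity), lt_div_iff₀ (by positivity), mul_comm]
  rw [lambdaFun, ciInf_lt_iff (Set.finite_range _).bddBelow]
  constructor
  · rintro ⟨k, hk⟩
    refine ⟨k + 1, mem_Icc.2 ⟨by lia, k.isLt⟩, (term_lt_iff _ k.succ_pos).1 ?_⟩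
    exact_mod_cast hk
  · rintro ⟨k, hk, hlt⟩
    obtain ⟨j, rfl⟩ := Nat.exists_eq_add_of_le' (mem_Icc.1 hk).1
    refine ⟨⟨j, (mem_Icc.1 hk).2⟩, ?_⟩
    exact_mod_cast (term_lt_iff _ j.succ_pos).2 hlt

end CalibrationStatistic

section UpperRank

variable {ι β : Type*} [Fintype ι] [LinearOrder β]

/-- The rank of `x i` among the values of `x`, counted from the smallest value upwards and with
every tie resolved to the largest possible rank. -/
def upperRank (x : ι → β) (i : ι) : ℕ := #{j | x j ≤ x i}

theorem upperRank_comp_perm (x : ι → β) (σ : Equiv.Perm ι) (i : ι) :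
    upperRank (fun j => x (σ j)) i = upperRank x (σ i) :=
  card_equiv σ fun j => by simp only [mem_filter_univ]

theorem card_upperRank_le (x : ι → β) (K : ℕ) : #{i | upperRank x i ≤ K} ≤ K := by
  rcases eq_empty_or_nonempty ({i | upperRank x i ≤ K} : Finset ι) with h | h
  · simp only [h, card_empty, zero_le]
  · obtain ⟨i, hi, le_max⟩ := exists_max_image _ x h
    calc #{j | upperRank x j ≤ K} ≤ upperRank x i :=
          card_le_card fun j hj => mem_filter_univ j |>.2 (le_max j hj)
      _ ≤ K := mem_filter_univ i |>.1 hi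

theorem measurable_upperRank [TopologicalSpace β] [OrderClosedTopology β]
    [SecondCountableTopology β] [MeasurableSpace β] [OpensMeasurableSpace β] (i : ι) :
    Measurable fun x : ι → β => upperRank x i :=
  measurable_card_filter univ fun j _ =>
    measurableSet_le (measurable_pi_apply j) (measurable_pi_apply i)

theorem lt_orderStat_univ_iff {B : ℕ} (x : Fin B → ℝ) (b : Fin B) {K : ℕ} (hK : K + 1 ≤ B) :
    x b < orderStat x univ (K + 1) ↔ upperRank x b ≤ K := by
  rw [← not_le, orderStat_le_iff x (by lia) (by rwa [card_fin]), not_le, Nat.lt_succ_iff, upperRank]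

end UpperRank

section Exchangeability

variable {Ω ι E F : Type*} [MeasurableSpace Ω] [MeasurableSpace E] [MeasurableSpace F]
  {μ : Measure Ω} {X : ι → Ω → E}

/-- A family of random variables whose joint law is preserved by enough permutations of the indices
to move any index to any other one. It covers exchangeable families and, for instance, cyclically
stationary ones; almost everywhere measurability is part of `IdentDistrib`. -/
def TransitivelyExchangeable (X : ι → Ω → E) (μ : Measure Ω) : Prop :=
  ∀ i j, ∃ σ : Equiv.Perm ι, σ i = j ∧
    IdentDistrib (fun ω k => X (σ k) ω) (fun ω k => X k ω) μ μ

theorem transitivelyExchangeable_of_map_perm_eq [Countable ι] (hX : ∀ i, AEMeasurable (X i) μ)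
    (hmap : ∀ σ : Equiv.Perm ι,
      μ.map (fun ω k => X (σ k) ω) = μ.map (fun ω k => X k ω)) :
    TransitivelyExchangeable X μ := by
  classical
  exact fun i j => ⟨Equiv.swap i j, Equiv.swap_apply_left i j,
    ⟨aemeasurable_pi_lambda _ fun k => hX _, aemeasurable_pi_lambda _ hX, hmap _⟩⟩

namespace TransitivelyExchangeable

theorem comp [Countable ι] (hX : TransitivelyExchangeable X μ) {f : E → F} (hf : Measurable f) :
    TransitivelyExchangeable (fun i ω => f (X i ω)) μ := fun i j => by
  obtain ⟨σ, hσ, h⟩ := hX i j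
  exact ⟨σ, hσ, h.comp (u := fun x k => f (x k)) (by fun_prop)⟩

theorem aemeasurable (hX : TransitivelyExchangeable X μ) (i : ι) :
    AEMeasurable (fun ω k => X k ω) μ :=
  have ⟨_, _, h⟩ := hX i i
  h.aemeasurable_snd

end TransitivelyExchangeable

theorem sum_measure_le_of_card_le [Fintype ι] {q : ι → Ω → Prop} [∀ i, DecidablePred (q i)]
    (hq : ∀ i, NullMeasurableSet {ω | q i ω} μ) {K : ℕ} (hK : ∀ ω, #{i | q i ω} ≤ K) :
    ∑ i, μ {ω | q i ω} ≤ K * μ Set.univ := by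
  have sum_indicator_le (ω : Ω) : ∑ i, {ω | q i ω}.indicator (1 : Ω → ℝ≥0∞) ω ≤ K := by
    simpa only [Set.indicator_apply, Set.mem_ofPred_eq, Pi.one_apply, sum_boole, Nat.cast_le]
      using hK ω
  calc ∑ i, μ {ω | q i ω} = ∑ i, ∫⁻ ω, {ω | q i ω}.indicator 1 ω ∂μ := by
        simp only [lintegral_indicator_one₀ (hq _)]
    _ = ∫⁻ ω, ∑ i, {ω | q i ω}.indicator 1 ω ∂μ :=
        (lintegral_finsetSum' _ fun i _ => aemeasurable_one.indicator₀ (hq i)).symm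
    _ ≤ ∫⁻ _, K ∂μ := lintegral_mono sum_indicator_le
    _ = K * μ Set.univ := lintegral_const _

variable [Fintype ι] [LinearOrder E] [TopologicalSpace E] [OrderClosedTopology E]
  [SecondCountableTopology E] [OpensMeasurableSpace E]

theorem TransitivelyExchangeable.card_mul_measure_upperRank_le
    (hX : TransitivelyExchangeable X μ) (i : ι) (K : ℕ) :
    Fintype.card ι * μ {ω | upperRank (X · ω) i ≤ K} ≤ K * μ Set.univ := by
  have measurableSet_low (j : ι) : MeasurableSet {x : ι → E | upperRank x j ≤ K} :=
    measurable_upperRank j measurableSet_Iic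
  have measure_eq (j : ι) :
      μ {ω | upperRank (X · ω) j ≤ K} = μ {ω | upperRank (X · ω) i ≤ K} := by
    obtain ⟨σ, rfl, h⟩ := hX i j
    have rank_perm (ω : Ω) : upperRank (fun k => X (σ k) ω) i = upperRank (X · ω) (σ i) :=
      upperRank_comp_perm (X · ω) σ i
    simpa only [Set.preimage_ofPred_eq, rank_perm] using h.measure_mem_eq (measurableSet_low i)
  calc Fintype.card ι * μ {ω | upperRank (X · ω) i ≤ K}
      = ∑ j, μ {ω | upperRank (X · ω) j ≤ K} := by
        simp only [measure_eq, sum_const, card_univ, nsmul_eq_mul]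
    _ ≤ K * μ Set.univ := sum_measure_le_of_card_le
        (fun j => (hX.aemeasurable i).nullMeasurableSet_preimage (measurableSet_low j))
        fun ω => card_upperRank_le (X · ω) K

theorem TransitivelyExchangeable.card_mul_measure_lt_orderStat_le {B : ℕ} {L : Fin B → Ω → ℝ}
    (hL : TransitivelyExchangeable L μ) (o : Fin B) {K : ℕ} (hK : K + 1 ≤ B) :
    B * μ {ω | L o ω < orderStat (L · ω) univ (K + 1)} ≤ K * μ Set.univ := by
  have lt_iff (ω : Ω) : L o ω < orderStat (L · ω) univ (K + 1) ↔ upperRank (L · ω) o ≤ K :=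
    lt_orderStat_univ_iff (L · ω) o hK
  simpa only [lt_iff, Fintype.card_fin] using hL.card_mul_measure_upperRank_le o K

end Exchangeability

theorem calibrated_simes_JER_control_general {Ω : Type*} [MeasurableSpace Ω] (μ : Measure Ω)
    {m B : ℕ} (hm : 0 < m) {α : ℝ} (hα : α ∈ Set.Icc (0 : ℝ) 1) {P : Fin B → Ω → Fin m → ℝ}
    (hP : TransitivelyExchangeable P μ) (o : Fin B) (hnonneg : ∀ᵐ ω ∂μ, ∀ i, 0 ≤ P o ω i) :
    μ {ω | ∃ k ∈ Icc 1 m, orderStat (P o ω) univ k <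
        (if ⌊α * B⌋₊ = 0 then 0 else
          orderStat (fun b => lambdaFun m (P b ω)) univ ⌊α * B⌋₊) * k / m}
      ≤ ENNReal.ofReal α * μ Set.univ := by
  simp only [← lambdaFun_lt_iff hm]
  rcases h : ⌊α * B⌋₊ with _ | K
  · have measure_eq_zero : μ {ω | lambdaFun m (P o ω) < 0} = 0 :=
      measure_eq_zero_iff_ae_notMem.2 <| hnonneg.mono fun ω hω => (lambdaFun_nonneg hω).not_gt
    simp only [↓reduceIte, measure_eq_zero, zero_le]
  · simp only [K.add_one_ne_zero, ↓reduceIte]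
    have succ_le : K + 1 ≤ B := h ▸ Nat.floor_le_of_le (mul_le_of_le_one_left B.cast_nonneg hα.2)
    have le_mul : (K : ℝ≥0∞) ≤ B * ENNReal.ofReal α := by
      rw [mul_comm, ← ENNReal.ofReal_natCast K, ← ENNReal.ofReal_natCast B,
        ← ENNReal.ofReal_mul hα.1]
      exact ENNReal.ofReal_le_ofReal <|
        (Nat.le_floor_iff (mul_nonneg hα.1 B.cast_nonneg)).1 (h ▸ K.le_succ)
    rw [← ENNReal.mul_le_mul_iff_right (by exact_mod_cast o.pos.ne') (ENNReal.natCast_ne_top B),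
      ← mul_assoc]
    calc B * μ {ω | lambdaFun m (P o ω) < orderStat (fun b => lambdaFun m (P b ω)) univ (K + 1)}
        ≤ K * μ Set.univ :=
          (hP.comp (measurable_lambdaFun m)).card_mul_measure_lt_orderStat_le o succ_le
      _ ≤ B * ENNReal.ofReal α * μ Set.univ := by gcongr

/-- Validity of the calibrated Simes method (Blanchard, Neuvial and Roquain,
2020): if `p⁽¹⁾,…,p⁽ᴮ⁾` are exchangeable random vectors in `[0,1]^m` with
`p⁽¹⁾` the observed null p-value vector, and `λ*` is the `⌊αB⌋`-th smallest
of the statistics `λ(p⁽ᵇ⁾)` (with `λ* = 0` if `⌊αB⌋ = 0`), then the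
calibrated Simes family `(λ*·k/m)ₖ` controls the Joint Error Rate at
level `α`. -/
theorem calibrated_simes_JER_control
    {Ω : Type*} [MeasurableSpace Ω] (μ : Measure Ω) [IsProbabilityMeasure μ]
    (m B : ℕ) (hm : 0 < m) (hB : 0 < B) (α : ℝ) (hα : α ∈ Set.Ioo (0 : ℝ) 1)
    (P : Fin B → Ω → Fin m → ℝ)
    (hmeas : ∀ b, Measurable (P b))
    (hrange : ∀ b ω i, P b ω i ∈ Set.Icc (0 : ℝ) 1)
    (hexch : ∀ σ : Equiv.Perm (Fin B),
      Measure.map (fun ω => fun b => P (σ b) ω) μ = Measure.map (fun ω => fun b => P b ω) μ) :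
    μ {ω | ∃ k ∈ Finset.Icc 1 m,
        orderStat (P ⟨0, hB⟩ ω) Finset.univ k <
          (if ⌊α * B⌋₊ = 0 then 0 else
            orderStat (fun b => lambdaFun m (P b ω)) Finset.univ ⌊α * B⌋₊) * k / m}
      ≤ ENNReal.ofReal α := by
  simpa only [measure_univ, mul_one] using calibrated_simes_JER_control_general μ hm
    (Set.Ioo_subset_Icc_self hα) (transitivelyExchangeable_of_map_perm_eq
      (fun b => (hmeas b).aemeasurable) hexch) ⟨0, hB⟩ (ae_of_all μ fun ω i => (hrange _ ω i).1)
end
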